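/- arXiv:2505.12951 — 7 statements merged into one kernel-verified Lean document; each statement's English description precedes it below -/
import Mathlib

section
/- Let Y be a finite nonempty type, p : Y → ℝ a probability mass function, r : Y → ℝ, and β > 0 a real number. Then the equality ∑_y p y · r y = β · log (∑_y p y · exp (r y / β)) holds if and only if r is constant on the support of p, i.e., there exists c : ℝ such that r y = c for every y with p y > 0. -/
/-!
In terms of `x = r / β`, the claim is the equality case of Jensen's inequality
`exp (∑ y, p y * x y) ≤ ∑ y, p y * exp (x y)`, in which the common value of `x` on the support of
`p` can only be its mean.
-/

section Jensen

variable {𝕜 E F ι : Type*} [Field 𝕜] [LinearOrder 𝕜] [IsStrictOrderedRing 𝕜]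
  [AddCommGroup E] [Module 𝕜 E]
  [AddCommGroup F] [PartialOrder F] [IsOrderedAddMonoid F] [Module 𝕜 F] [IsStrictOrderedModule 𝕜 F]
  {C : Set E} {f : E → F} {s : Finset ι} {w : ι → 𝕜} {x : ι → E}

theorem strictConvexOn_map_sum_eq_iff_exists_eq (hf : StrictConvexOn 𝕜 C f)
    (hw : ∀ i ∈ s, 0 ≤ w i) (hw_sum : ∑ i ∈ s, w i = 1) (hx : ∀ i ∈ s, x i ∈ C) :
    f (∑ i ∈ s, w i • x i) = ∑ i ∈ s, w i • f (x i) ↔ ∃ c, ∀ i ∈ s, w i ≠ 0 → x i = c := by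
  constructor
  · intro h
    exact ⟨_, (hf.map_sum_eq_iff' hw hw_sum hx).1 h⟩
  · rintro ⟨c, hc⟩
    exact (hf.map_sum_eq_iff_of_nonneg hw hw_sum hx).2
      fun i hi hwi j hj hwj ↦ (hc i hi hwi).trans (hc j hj hwj).symm

end Jensen

section LogSumExp

variable {ι : Type*} {s : Finset ι} {w : ι → ℝ}

theorem exp_sum_mul_le_sum_mul_exp (hw : ∀ i ∈ s, 0 ≤ w i) (hw_sum : ∑ i ∈ s, w i = 1)
    (x : ι → ℝ) : Real.exp (∑ i ∈ s, w i * x i) ≤ ∑ i ∈ s, w i * Real.exp (x i) :=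
  convexOn_exp.map_sum_le hw hw_sum fun _ _ ↦ Set.mem_univ _

theorem exp_sum_mul_eq_sum_mul_exp_iff (hw : ∀ i ∈ s, 0 ≤ w i) (hw_sum : ∑ i ∈ s, w i = 1)
    (x : ι → ℝ) :
    Real.exp (∑ i ∈ s, w i * x i) = ∑ i ∈ s, w i * Real.exp (x i) ↔
      ∃ c, ∀ i ∈ s, w i ≠ 0 → x i = c :=
  strictConvexOn_map_sum_eq_iff_exists_eq strictConvexOn_exp hw hw_sum fun _ _ ↦ Set.mem_univ _

theorem sum_mul_eq_log_sum_mul_exp_iff (hw : ∀ i ∈ s, 0 ≤ w i) (hw_sum : ∑ i ∈ s, w i = 1)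
    (x : ι → ℝ) :
    ∑ i ∈ s, w i * x i = Real.log (∑ i ∈ s, w i * Real.exp (x i)) ↔
      ∃ c, ∀ i ∈ s, w i ≠ 0 → x i = c := by
  have sum_pos : 0 < ∑ i ∈ s, w i * Real.exp (x i) :=
    (Real.exp_pos _).trans_le (exp_sum_mul_le_sum_mul_exp hw hw_sum x)
  rw [← exp_sum_mul_eq_sum_mul_exp_iff hw hw_sum, ← Real.exp_eq_exp, Real.exp_log sum_pos]

end LogSumExp

theorem exists_forall_div_eq_iff {ι G : Type*} [GroupWithZero G] {P : ι → Prop} {r : ι → G} {b : G}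
    (hb : b ≠ 0) : (∃ c, ∀ i, P i → r i / b = c) ↔ ∃ c, ∀ i, P i → r i = c := by
  constructor
  · rintro ⟨c, hc⟩
    exact ⟨c * b, fun i hi ↦ (div_eq_iff hb).1 (hc i hi)⟩
  · rintro ⟨c, hc⟩
    exact ⟨c / b, fun i hi ↦ congrArg (· / b) (hc i hi)⟩

theorem stmt_0_general {ι : Type*} {s : Finset ι} {p : ι → ℝ} (hp : ∀ i ∈ s, 0 ≤ p i)
    (hps : ∑ i ∈ s, p i = 1) (r : ι → ℝ) {β : ℝ} (hβ : β ≠ 0) :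
    ∑ i ∈ s, p i * r i = β * Real.log (∑ i ∈ s, p i * Real.exp (r i / β)) ↔
      ∃ c, ∀ i ∈ s, 0 < p i → r i = c := by
  have mean_div : ∑ i ∈ s, p i * (r i / β) = (∑ i ∈ s, p i * r i) / β := by
    simp only [Finset.sum_div, mul_div_assoc]
  calc
    _ ↔ ∑ i ∈ s, p i * (r i / β) = Real.log (∑ i ∈ s, p i * Real.exp (r i / β)) := by
      rw [mean_div, div_eq_iff hβ, mul_comm β]
    _ ↔ ∃ c, ∀ i ∈ s, p i ≠ 0 → r i / β = c := sum_mul_eq_log_sum_mul_exp_iff hp hps _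
    _ ↔ ∃ c, ∀ i ∈ s, p i ≠ 0 → r i = c := by
      simpa only [and_imp] using
        exists_forall_div_eq_iff (P := fun i ↦ i ∈ s ∧ p i ≠ 0) (r := r) hβ
    _ ↔ ∃ c, ∀ i ∈ s, 0 < p i → r i = c :=
      exists_congr fun _ ↦ forall₂_congr fun i hi ↦ by rw [(hp i hi).lt_iff_ne']

theorem stmt_0 {Y : Type*} [Fintype Y] [Nonempty Y]
    (p : Y → ℝ) (hp : ∀ y, 0 ≤ p y) (hps : ∑ y, p y = 1)
    (r : Y → ℝ) (β : ℝ) (hβ : 0 < β) :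
    (∑ y, p y * r y) = β * Real.log (∑ y, p y * Real.exp (r y / β)) ↔
      ∃ c : ℝ, ∀ y, 0 < p y → r y = c := by
  simpa only [Finset.mem_univ, true_imp_iff] using
    stmt_0_general (fun y _ ↦ hp y) hps r hβ.ne'
end

section
/- Let Y be a finite nonempty type, p : Y → ℝ a probability mass function, and r : Y → ℝ. Then β · log (∑_y p y · exp (r y / β)) tends to ∑_y p y · r y as β → ∞; equivalently, (∑_y p y · exp (r y / β))^β tends to exp (∑_y p y · r y) as β → ∞. -/
open Filter

/-!
Since the weights sum to `1`, the partition function `∑ i, p i * exp (r i / β)` equals `1 + g β`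
with `g β = ∑ i, p i * (exp (r i / β) - 1)`, and `β * g β → ∑ i, p i * r i` because `exp` has
derivative `1` at `0`. The limits `β * log (1 + g β) → t` and `(1 + g β) ^ β → exp t`, valid as
soon as `β * g β → t`, give both claims.
-/

theorem tendsto_mul_exp_div_sub_one_atTop (a : ℝ) :
    Tendsto (fun β : ℝ => β * (Real.exp (a / β) - 1)) atTop (nhds a) := by
  have hdiff := (Real.hasDerivAt_exp 0).hasFDerivAt.lim a tendsto_norm_atTop_atTop
  simpa [div_eq_inv_mul] using hdiff

theorem tendsto_mul_sum_mul_exp_div_sub_one_atTop {ι : Type*} (s : Finset ι) (p r : ι → ℝ) :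
    Tendsto (fun β : ℝ => β * ∑ i ∈ s, p i * (Real.exp (r i / β) - 1))
      atTop (nhds (∑ i ∈ s, p i * r i)) := by
  simp only [Finset.mul_sum, mul_left_comm _ (p _)]
  exact tendsto_finsetSum s fun i _ => (tendsto_mul_exp_div_sub_one_atTop (r i)).const_mul (p i)

theorem sum_mul_eq_one_add_sum_mul_sub_one {ι R : Type*} [NonAssocRing R] {s : Finset ι}
    {p : ι → R} (hps : ∑ i ∈ s, p i = 1) (f : ι → R) :
    ∑ i ∈ s, p i * f i = 1 + ∑ i ∈ s, p i * (f i - 1) := by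
  simp [mul_sub, hps]

theorem stmt_1_general {ι : Type*} {s : Finset ι} {p : ι → ℝ} (hps : ∑ i ∈ s, p i = 1)
    (r : ι → ℝ) :
    Tendsto (fun β : ℝ => β * Real.log (∑ i ∈ s, p i * Real.exp (r i / β)))
      atTop (nhds (∑ i ∈ s, p i * r i)) ∧
    Tendsto (fun β : ℝ => (∑ i ∈ s, p i * Real.exp (r i / β)) ^ β)
      atTop (nhds (Real.exp (∑ i ∈ s, p i * r i))) := by
  have hpartition (β : ℝ) : ∑ i ∈ s, p i * Real.exp (r i / β) =
      1 + ∑ i ∈ s, p i * (Real.exp (r i / β) - 1) :=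
    sum_mul_eq_one_add_sum_mul_sub_one hps _
  have hmean := tendsto_mul_sum_mul_exp_div_sub_one_atTop s p r
  simp only [hpartition]
  exact ⟨Real.tendsto_mul_log_one_add_of_tendsto hmean,
    Real.tendsto_one_add_rpow_exp_of_tendsto hmean⟩

theorem stmt_1 {Y : Type*} [Fintype Y] [Nonempty Y]
    (p : Y → ℝ) (hp : ∀ y, 0 ≤ p y) (hps : ∑ y, p y = 1)
    (r : Y → ℝ) :
    Tendsto (fun β : ℝ => β * Real.log (∑ y, p y * Real.exp (r y / β)))
      atTop (nhds (∑ y, p y * r y)) ∧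
    Tendsto (fun β : ℝ => (∑ y, p y * Real.exp (r y / β)) ^ β)
      atTop (nhds (Real.exp (∑ y, p y * r y))) :=
  stmt_1_general hps r
end

section
/- Let Y be a finite nonempty type, p : Y → ℝ a probability mass function, and r : Y → ℝ. Let m be the maximum of r over the support of p. Then β · log (∑_y p y · exp (r y / β)) tends to m as β → 0 from the right; consequently, the gap V(β) − r̄ = β · log (∑_y p y · exp (r y / β)) − ∑_y p y · r y tends to m − r̄ as β → 0⁺. -/
open Filter

/-!
Write `Z β = ∑' y, p y * exp (r y / β)`. Every single outcome `y` of positive weight gives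
`p y * exp (r y / β) ≤ Z β`, and bounding all rewards by their supremum `m` gives
`Z β ≤ (∑' y, p y) * exp (m / β)`. Applying `β * log` turns these into
`r y + β * log (p y) ≤ β * log (Z β) ≤ m + β * log (∑' y, p y)`, where the logarithmic corrections
vanish as `β → 0⁺` and `r y` can be chosen arbitrarily close to `m`.
-/

section SoftValue

variable {Y : Type*} {p r : Y → ℝ} {m β : ℝ}

/-- The soft value `V(β)` of the reward `r` at temperature `β`, for nonnegative weights `p` on a
possibly infinite type. The weights need not sum to one; the value is meaningful when `β ≠ 0` and
the series converges. -/
noncomputable def softValue (p r : Y → ℝ) (β : ℝ) : ℝ :=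
  β * Real.log (∑' y, p y * Real.exp (r y / β))

lemma softValue_eq_sum [Fintype Y] (p r : Y → ℝ) (β : ℝ) :
    softValue p r β = β * Real.log (∑ y, p y * Real.exp (r y / β)) := by
  rw [softValue, tsum_fintype]

lemma mul_log_mul_exp_div {c : ℝ} (hc : c ≠ 0) (hβ : β ≠ 0) (a : ℝ) :
    β * Real.log (c * Real.exp (a / β)) = a + β * Real.log c := by
  rw [Real.log_mul hc (Real.exp_ne_zero _), Real.log_exp, mul_add, mul_div_cancel₀ a hβ, add_comm]

lemma tendsto_add_mul_nhdsGT_zero (a c : ℝ) :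
    Tendsto (fun β : ℝ => a + β * c) (nhdsWithin 0 (Set.Ioi 0)) (nhds a) := by
  have hcont : Continuous fun β : ℝ => a + β * c := by fun_prop
  simpa using (hcont.tendsto 0).mono_left nhdsWithin_le_nhds

lemma weight_mul_exp_le (hp : ∀ y, 0 ≤ p y) (hm : ∀ y, 0 < p y → r y ≤ m) (hβ : 0 ≤ β) (y : Y) :
    p y * Real.exp (r y / β) ≤ p y * Real.exp (m / β) := by
  rcases (hp y).eq_or_lt with hzero | hpos
  · simp [← hzero]
  · have := hm y hpos
    gcongr

lemma summable_weight_mul_exp (hp : ∀ y, 0 ≤ p y) (hps : Summable p)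
    (hm : ∀ y, 0 < p y → r y ≤ m) (hβ : 0 ≤ β) :
    Summable fun y => p y * Real.exp (r y / β) :=
  (hps.mul_right _).of_nonneg_of_le (fun y => mul_nonneg (hp y) (Real.exp_nonneg _))
    (weight_mul_exp_le hp hm hβ)

lemma add_mul_log_le_softValue (hp : ∀ y, 0 ≤ p y)
    (hZ : Summable fun y => p y * Real.exp (r y / β)) (hβ : 0 < β) {y : Y} (hy : 0 < p y) :
    r y + β * Real.log (p y) ≤ softValue p r β := by
  have hle : p y * Real.exp (r y / β) ≤ ∑' z, p z * Real.exp (r z / β) :=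
    hZ.le_tsum y fun z _ => mul_nonneg (hp z) (Real.exp_nonneg _)
  rw [← mul_log_mul_exp_div hy.ne' hβ.ne', softValue]
  gcongr

lemma softValue_le_add_mul_log (hp : ∀ y, 0 ≤ p y) (hps : Summable p)
    (hm : ∀ y, 0 < p y → r y ≤ m) (hβ : 0 < β) {y : Y} (hy : 0 < p y) :
    softValue p r β ≤ m + β * Real.log (∑' z, p z) := by
  have hZ := summable_weight_mul_exp hp hps hm hβ.le
  have hZpos : 0 < ∑' z, p z * Real.exp (r z / β) :=
    hZ.tsum_pos (fun z => mul_nonneg (hp z) (Real.exp_nonneg _)) y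
      (mul_pos hy (Real.exp_pos _))
  have hle : ∑' z, p z * Real.exp (r z / β) ≤ (∑' z, p z) * Real.exp (m / β) := by
    rw [← tsum_mul_right]
    exact hZ.tsum_le_tsum (weight_mul_exp_le hp hm hβ.le) (hps.mul_right _)
  rw [← mul_log_mul_exp_div (hps.tsum_pos hp y hy).ne' hβ.ne', softValue]
  gcongr

end SoftValue

theorem stmt_2_general {Y : Type*} {p r : Y → ℝ} {m : ℝ} (hp : ∀ y, 0 ≤ p y) (hps : Summable p)
    (hm : IsLUB (r '' {y | 0 < p y}) m) :
    Tendsto (softValue p r) (nhdsWithin 0 (Set.Ioi 0)) (nhds m) := by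
  have hub : ∀ y, 0 < p y → r y ≤ m := fun y hy => hm.1 (Set.mem_image_of_mem r hy)
  refine tendsto_order.2 ⟨fun a ha => ?_, fun b hb => ?_⟩
  · obtain ⟨_, ⟨y, hy, rfl⟩, hay⟩ := (lt_isLUB_iff hm).1 ha
    filter_upwards [self_mem_nhdsWithin,
      (tendsto_add_mul_nhdsGT_zero (r y) (Real.log (p y))).eventually_const_lt hay] with β hβ haβ
    have hZ := summable_weight_mul_exp hp hps hub (Set.mem_Ioi.1 hβ).le
    exact haβ.trans_le (add_mul_log_le_softValue hp hZ hβ hy)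
  · obtain ⟨y, hy⟩ := hm.nonempty.of_image
    filter_upwards [self_mem_nhdsWithin,
      (tendsto_add_mul_nhdsGT_zero m (Real.log (∑' y, p y))).eventually_lt_const hb] with β hβ hβb
    exact (softValue_le_add_mul_log hp hps hub hβ hy).trans_lt hβb

theorem stmt_2 {Y : Type*} [Fintype Y] [Nonempty Y]
    (p : Y → ℝ) (hp : ∀ y, 0 ≤ p y) (hps : ∑ y, p y = 1)
    (r : Y → ℝ) (m : ℝ)
    (hm_ub : ∀ y, 0 < p y → r y ≤ m)
    (hm_mem : ∃ y, 0 < p y ∧ r y = m) :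
    Tendsto (fun β : ℝ => β * Real.log (∑ y, p y * Real.exp (r y / β)))
      (nhdsWithin 0 (Set.Ioi 0)) (nhds m) ∧
    Tendsto (fun β : ℝ =>
        β * Real.log (∑ y, p y * Real.exp (r y / β)) - ∑ y, p y * r y)
      (nhdsWithin 0 (Set.Ioi 0)) (nhds (m - ∑ y, p y * r y)) := by
  have hm : IsGreatest (r '' {y | 0 < p y}) m := ⟨hm_mem, Set.forall_mem_image.2 hm_ub⟩
  have hlim := (stmt_2_general hp .of_finite hm.isLUB).congr (softValue_eq_sum p r)
  exact ⟨hlim, hlim.sub_const _⟩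
end

section
/- Let Y be a finite nonempty type, p : Y → ℝ a probability mass function, r : Y → ℝ, and β > 0. Let m be the maximum of r over the support of p and let p* = ∑_{y : r y = m} p y. Then 0 ≤ β · log (∑_y p y · exp (r y / β)) − ∑_y p y · r y ≤ (m − r̄) + β · (log p* + (1 − p*)/p*), where r̄ = ∑_y p y · r y. -/
/-!
The soft value `β * log 𝔼[exp (r / β)]` lies between the mean and the maximum of the reward `r`:
the lower bound is Jensen's inequality for `exp`, and the upper one holds because
`exp (r / β) ≤ exp (m / β)` almost surely. The remaining error term `log q + (1 - q) / q`, where `q`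
is the probability of attaining the maximum, is nonnegative since `1 - q⁻¹ ≤ log q`.
-/

open MeasureTheory ProbabilityTheory Real

theorem log_add_one_sub_div_self_nonneg {q : ℝ} (hq : 0 < q) : 0 ≤ log q + (1 - q) / q := by
  rw [sub_div, div_self hq.ne', one_div]
  linarith [one_sub_inv_le_log_of_pos hq]

section CumulantGeneratingFunction

variable {Ω : Type*} [MeasurableSpace Ω] {μ : Measure Ω} [IsProbabilityMeasure μ] {X : Ω → ℝ}
  {t : ℝ}

theorem mul_integral_le_cgf (hX : Integrable X μ) (hexp : Integrable (fun ω => exp (t * X ω)) μ) :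
    t * ∫ ω, X ω ∂μ ≤ cgf X μ t := by
  have jensen : exp (∫ ω, t * X ω ∂μ) ≤ mgf X μ t :=
    convexOn_exp.map_integral_le continuous_exp.continuousOn isClosed_univ (by simp)
      (hX.const_mul t) hexp
  rwa [← integral_const_mul, cgf, le_log_iff_exp_le (mgf_pos hexp)]

theorem cgf_le_mul_of_ae_le (hexp : Integrable (fun ω => exp (t * X ω)) μ) (ht : 0 ≤ t) {b : ℝ}
    (hb : ∀ᵐ ω ∂μ, X ω ≤ b) : cgf X μ t ≤ t * b :=
  calc cgf X μ t ≤ cgf (fun _ => b) μ t :=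
        log_le_log (mgf_pos hexp) (mgf_mono_of_nonneg hb ht (integrable_const _))
    _ = t * b := cgf_const b

theorem stmt_4_general (hX : Integrable X μ) {β : ℝ} (hβ : 0 < β) {m : ℝ}
    (hm : ∀ᵐ ω ∂μ, X ω ≤ m) (hpos : 0 < μ.real {ω | X ω = m}) :
    0 ≤ β * log (∫ ω, exp (X ω / β) ∂μ) - ∫ ω, X ω ∂μ ∧
    β * log (∫ ω, exp (X ω / β) ∂μ) - ∫ ω, X ω ∂μ ≤
      (m - ∫ ω, X ω ∂μ) +
        β * (log (μ.real {ω | X ω = m}) +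
          (1 - μ.real {ω | X ω = m}) / μ.real {ω | X ω = m}) := by
  have hβ' : 0 ≤ β⁻¹ := (inv_pos.2 hβ).le
  have hexp : Integrable (fun ω => exp (β⁻¹ * X ω)) μ :=
    integrable_exp_mul_of_le β⁻¹ m hβ' hX.aemeasurable hm
  have hcgf : log (∫ ω, exp (X ω / β) ∂μ) = cgf X μ β⁻¹ := by
    simp only [cgf, mgf, div_eq_inv_mul]
  have hlower : ∫ ω, X ω ∂μ ≤ β * cgf X μ β⁻¹ :=
    (inv_mul_le_iff₀ hβ).1 (mul_integral_le_cgf hX hexp)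
  have hupper : β * cgf X μ β⁻¹ ≤ m :=
    (le_inv_mul_iff₀ hβ).1 (cgf_le_mul_of_ae_le hexp hβ' hm)
  have herror := mul_nonneg hβ.le (log_add_one_sub_div_self_nonneg hpos)
  rw [hcgf]
  constructor <;> linarith

end CumulantGeneratingFunction

section ProbabilityMassFunction

theorem exists_pmf_toReal_eq {ι : Type*} [Fintype ι] {p : ι → ℝ} (hp : ∀ i, 0 ≤ p i)
    (hps : ∑ i, p i = 1) : ∃ P : PMF ι, ∀ i, (P i).toReal = p i := by
  have hsum : ∑ i, ENNReal.ofReal (p i) = 1 := by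
    rw [← ENNReal.ofReal_sum_of_nonneg fun i _ => hp i, hps, ENNReal.ofReal_one]
  exact ⟨PMF.ofFintype _ hsum, fun i => ENNReal.toReal_ofReal (hp i)⟩

variable {α : Type*} [MeasurableSpace α] [MeasurableSingletonClass α] (P : PMF α)

theorem pmf_toMeasure_real_finset (s : Finset α) :
    P.toMeasure.real s = ∑ a ∈ s, (P a).toReal := by
  rw [measureReal_def, P.toMeasure_apply_finset, ENNReal.toReal_sum fun a _ => P.apply_ne_top a]

theorem ae_pmf_toMeasure_iff {q : α → Prop} :
    (∀ᵐ a ∂P.toMeasure, q a) ↔ ∀ a ∈ P.support, q a := by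
  rw [ae_iff, P.toMeasure_apply_eq_toOuterMeasure, P.toOuterMeasure_apply_eq_zero_iff,
    Set.disjoint_left]
  simp only [Set.mem_ofPred_eq, not_not]

end ProbabilityMassFunction

theorem stmt_4 {Y : Type*} [Fintype Y] [Nonempty Y]
    (p : Y → ℝ) (hp : ∀ y, 0 ≤ p y) (hps : ∑ y, p y = 1)
    (r : Y → ℝ) (β : ℝ) (hβ : 0 < β) (m : ℝ)
    (hm_ub : ∀ y, 0 < p y → r y ≤ m)
    (hm_mem : ∃ y, 0 < p y ∧ r y = m) :
    0 ≤ β * Real.log (∑ y, p y * Real.exp (r y / β)) - ∑ y, p y * r y ∧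
    β * Real.log (∑ y, p y * Real.exp (r y / β)) - ∑ y, p y * r y ≤
      (m - ∑ y, p y * r y) +
        β * (Real.log (∑ y ∈ Finset.univ.filter (fun y => r y = m), p y) +
          (1 - ∑ y ∈ Finset.univ.filter (fun y => r y = m), p y) /
            (∑ y ∈ Finset.univ.filter (fun y => r y = m), p y)) := by
  obtain ⟨P, hP⟩ := exists_pmf_toReal_eq hp hps
  let _ : MeasurableSpace Y := ⊤
  have hint (f : Y → ℝ) : ∫ y, f y ∂P.toMeasure = ∑ y, p y * f y := by
    simp only [PMF.integral_eq_sum, hP, smul_eq_mul]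
  have hreal : P.toMeasure.real {y | r y = m} = ∑ y with r y = m, p y := by
    simpa only [hP, Finset.coe_filter_univ] using pmf_toMeasure_real_finset P {y | r y = m}
  have hle : ∀ᵐ y ∂P.toMeasure, r y ≤ m := (ae_pmf_toMeasure_iff P).2 fun y hy =>
    hm_ub y (hP y ▸ ENNReal.toReal_pos hy (P.apply_ne_top y))
  have hpos : 0 < ∑ y with r y = m, p y :=
    let ⟨y, hy, hym⟩ := hm_mem
    Finset.sum_pos' (fun y _ => hp y) ⟨y, by simpa using hym, hy⟩
  simpa only [hint, hreal] using stmt_4_general .of_finite hβ hle (hreal ▸ hpos)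
end

section
/- Let Y be a finite nonempty type, p : Y → ℝ a probability mass function, and r : Y → ℝ. Then β · (β · log (∑_y p y · exp (r y / β)) − ∑_y p y · r y) tends to Var/2 as β → ∞, where Var = ∑_y p y · (r y − r̄)² and r̄ = ∑_y p y · r y. -/
open Filter

/-!
With `t = 1 / β`, the soft value is the cumulant generating function `K` of the reward, rescaled:
`V β = K t / t`. The first two cumulants of a random variable are its mean and its variance, so
Taylor's theorem gives `K t = t * r̄ + t ^ 2 * Var / 2 + o(t ^ 2)`. Hence
`β * (V β - r̄) = (K t - t * r̄) / t ^ 2` tends to `Var / 2`.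
-/

open Asymptotics MeasureTheory ProbabilityTheory

open scoped Topology

section Taylor

variable {E : Type*} [NormedAddCommGroup E] [NormedSpace ℝ E]

lemma taylorWithinEval_eq_univ_of_isOpen {f : ℝ → E} {s : Set ℝ} {x₀ : ℝ} (n : ℕ)
    (hs : IsOpen s) (hx₀ : x₀ ∈ s) (x : ℝ) :
    taylorWithinEval f n s x₀ x = taylorWithinEval f n Set.univ x₀ x := by
  simp only [taylor_within_apply, iteratedDerivWithin_univ, iteratedDerivWithin_of_isOpen hs hx₀]

lemma taylor_isLittleO_of_contDiffAt {f : ℝ → E} {x₀ : ℝ} {n : ℕ} (hf : ContDiffAt ℝ n f x₀) :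
    (fun x ↦ f x - taylorWithinEval f n Set.univ x₀ x) =o[𝓝 x₀] fun x ↦ (x - x₀) ^ n := by
  obtain ⟨u, hu, hfu⟩ := hf.contDiffOn le_rfl (by simp)
  obtain ⟨ε, hε, hball⟩ := Metric.mem_nhds_iff.mp (by simpa using hu)
  have hx₀ : x₀ ∈ Metric.ball x₀ ε := Metric.mem_ball_self hε
  simpa only [Metric.isOpen_ball.nhdsWithin_eq hx₀,
    taylorWithinEval_eq_univ_of_isOpen n Metric.isOpen_ball hx₀]
    using taylor_isLittleO (convex_ball x₀ ε) hx₀ (hfu.mono hball)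

end Taylor

section Cumulants

variable {Ω : Type*} [MeasurableSpace Ω] {μ : Measure Ω} [IsProbabilityMeasure μ] {X : Ω → ℝ}

lemma iteratedDeriv_two_cgf_zero (h : 0 ∈ interior (integrableExpSet X μ)) :
    iteratedDeriv 2 (cgf X μ) 0 = Var[X; μ] := by
  simp [← variance_tilted_mul h]

lemma cgf_sub_mean_add_variance_isLittleO_sq (h : 0 ∈ interior (integrableExpSet X μ)) :
    (fun t ↦ cgf X μ t - (t * μ[X] + t ^ 2 * (Var[X; μ] / 2))) =o[𝓝 0] fun t ↦ t ^ 2 := by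
  have hmean : deriv (cgf X μ) 0 = μ[X] := by simp [deriv_cgf_zero h]
  have htaylor (t : ℝ) : taylorWithinEval (cgf X μ) 2 Set.univ 0 t
      = t * μ[X] + t ^ 2 * (Var[X; μ] / 2) := by
    simp only [taylorWithinEval_succ, taylor_within_zero_eval, iteratedDerivWithin_univ,
      iteratedDeriv_one, cgf_zero, hmean, iteratedDeriv_two_cgf_zero h, smul_eq_mul, sub_zero,
      zero_add, Nat.reduceAdd, Nat.factorial_zero, Nat.factorial_one, Nat.cast_zero, Nat.cast_one]
    ring
  simpa only [htaylor, sub_zero] using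
    taylor_isLittleO_of_contDiffAt (n := 2) (analyticAt_cgf h).contDiffAt

theorem stmt_10_general (h : 0 ∈ interior (integrableExpSet X μ)) :
    Tendsto (fun β : ℝ ↦ β * (β * Real.log (∫ ω, Real.exp (X ω / β) ∂μ) - ∫ ω, X ω ∂μ))
      atTop (𝓝 (Var[X; μ] / 2)) := by
  have hremainder := (cgf_sub_mean_add_variance_isLittleO_sq h).tendsto_div_nhds_zero.comp
    tendsto_inv_atTop_zero
  rw [← zero_add (Var[X; μ] / 2)]
  refine (hremainder.add_const (Var[X; μ] / 2)).congr' ?_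
  filter_upwards [eventually_ne_atTop 0] with β hβ
  have hcgf : cgf X μ β⁻¹ = Real.log (∫ ω, Real.exp (X ω / β) ∂μ) := by
    simp only [cgf, mgf, div_eq_inv_mul]
  simp only [Function.comp_apply, hcgf]
  field_simp
  ring

end Cumulants

lemma integrableExpSet_eq_univ_of_finite {Ω : Type*} [Finite Ω] [MeasurableSpace Ω]
    [MeasurableSingletonClass Ω] (X : Ω → ℝ) (μ : Measure Ω) [IsFiniteMeasure μ] :
    integrableExpSet X μ = Set.univ :=
  Set.eq_univ_of_forall fun _ ↦ .of_finite

section FiniteType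

variable {Y : Type*} [Fintype Y]

/-- The probability mass function on a finite type with real weights `p`, as a `PMF` (whose values
lie in `ℝ≥0∞`), so that sums weighted by `p` become integrals. -/
noncomputable def pmfOfReal (p : Y → ℝ) (hp : ∀ y, 0 ≤ p y) (hps : ∑ y, p y = 1) : PMF Y :=
  PMF.ofFintype (fun y ↦ ENNReal.ofReal (p y)) <| by
    rw [← ENNReal.ofReal_sum_of_nonneg fun y _ ↦ hp y, hps, ENNReal.ofReal_one]

variable [MeasurableSpace Y] [MeasurableSingletonClass Y] {p : Y → ℝ}

lemma integral_pmfOfReal {E : Type*} [NormedAddCommGroup E] [NormedSpace ℝ E] [CompleteSpace E]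
    (hp : ∀ y, 0 ≤ p y) (hps : ∑ y, p y = 1) (f : Y → E) :
    ∫ y, f y ∂(pmfOfReal p hp hps).toMeasure = ∑ y, p y • f y := by
  simp [PMF.integral_eq_sum, pmfOfReal, ENNReal.toReal_ofReal (hp _)]

lemma variance_pmfOfReal (hp : ∀ y, 0 ≤ p y) (hps : ∑ y, p y = 1) (r : Y → ℝ) :
    Var[r; (pmfOfReal p hp hps).toMeasure] = ∑ y, p y * (r y - ∑ z, p z * r z) ^ 2 := by
  simp only [variance_eq_integral (Measurable.of_discrete (f := r)).aemeasurable,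
    integral_pmfOfReal, smul_eq_mul]

end FiniteType

theorem stmt_10 {Y : Type*} [Fintype Y] [Nonempty Y]
    (p : Y → ℝ) (hp : ∀ y, 0 ≤ p y) (hps : ∑ y, p y = 1)
    (r : Y → ℝ) :
    Tendsto (fun β : ℝ =>
        β * (β * Real.log (∑ y, p y * Real.exp (r y / β)) - ∑ y, p y * r y))
      atTop (nhds ((∑ y, p y * (r y - ∑ z, p z * r z) ^ 2) / 2)) := by
  let _ : MeasurableSpace Y := ⊤
  simpa only [integral_pmfOfReal, variance_pmfOfReal, smul_eq_mul] using
    stmt_10_general (μ := (pmfOfReal p hp hps).toMeasure) (X := r)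
      (by simp [integrableExpSet_eq_univ_of_finite])
end

section
/- Let Y be a finite nonempty type, p : Y → ℝ a probability mass function, r : Y → ℝ with |r y| ≤ r_max for all y (r_max ≥ 0), and let E be a real normed vector space and g : Y → E satisfy ‖g y‖ ≤ G for all y (G ≥ 0). Then for every c > 0, ‖∑_y p y • ((r y − r̄) • g y)‖ ≤ G · c + 2 · r_max · G · (Var / c²), where r̄ = ∑_y p y · r y and Var = ∑_y p y · (r y − r̄)². -/
section WeightedSum

variable {ι K : Type*} [Field K] [LinearOrder K] [IsStrictOrderedRing K]

-- Chebyshev's splitting, done pointwise: the indicator of `c ≤ |d|` is at most `d ^ 2 / c ^ 2`.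
lemma abs_le_add_mul_sq_div_sq {d M c : K} (hd : |d| ≤ M) (hc : 0 < c) :
    |d| ≤ c + M * (d ^ 2 / c ^ 2) := by
  have hM : 0 ≤ M := (abs_nonneg d).trans hd
  rcases le_total |d| c with hsmall | hlarge
  · exact hsmall.trans (le_add_of_nonneg_right (by positivity))
  · have one_le_ratio : 1 ≤ d ^ 2 / c ^ 2 := by
      rw [one_le_div (by positivity), ← sq_abs d]
      gcongr
    calc |d| ≤ M := hd
      _ ≤ M * (d ^ 2 / c ^ 2) := le_mul_of_one_le_right hM one_le_ratio
      _ ≤ c + M * (d ^ 2 / c ^ 2) := le_add_of_nonneg_left hc.le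

lemma sum_mul_abs_le_add_mul_sum_mul_sq_div_sq {s : Finset ι} {w d : ι → K} {M c : K}
    (hw : ∀ i ∈ s, 0 ≤ w i) (hd : ∀ i ∈ s, |d i| ≤ M) (hc : 0 < c) :
    ∑ i ∈ s, w i * |d i| ≤ (∑ i ∈ s, w i) * c + M * ((∑ i ∈ s, w i * d i ^ 2) / c ^ 2) :=
  calc ∑ i ∈ s, w i * |d i| ≤ ∑ i ∈ s, w i * (c + M * (d i ^ 2 / c ^ 2)) :=
        Finset.sum_le_sum fun i hi =>
          mul_le_mul_of_nonneg_left (abs_le_add_mul_sq_div_sq (hd i hi) hc) (hw i hi)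
    _ = ∑ i ∈ s, (w i * c + M * (w i * d i ^ 2 / c ^ 2)) :=
        Finset.sum_congr rfl fun i _ => by ring
    _ = (∑ i ∈ s, w i) * c + M * ((∑ i ∈ s, w i * d i ^ 2) / c ^ 2) := by
        rw [Finset.sum_add_distrib, ← Finset.sum_mul, ← Finset.mul_sum, ← Finset.sum_div]

end WeightedSum

section Normed

variable {ι E : Type*} [SeminormedAddCommGroup E] [NormedSpace ℝ E] {s : Finset ι} {w : ι → ℝ}

lemma norm_sum_smul_smul_le {𝕜 : Type*} [SeminormedRing 𝕜] [Module 𝕜 E] [IsBoundedSMul 𝕜 E]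
    {d : ι → 𝕜} {g : ι → E} {G : ℝ} (hw : ∀ i ∈ s, 0 ≤ w i) (hg : ∀ i ∈ s, ‖g i‖ ≤ G) :
    ‖∑ i ∈ s, w i • d i • g i‖ ≤ G * ∑ i ∈ s, w i * ‖d i‖ := by
  rw [Finset.mul_sum]
  refine norm_sum_le_of_le s fun i hi => ?_
  calc ‖w i • d i • g i‖ = w i * ‖d i • g i‖ := norm_smul_of_nonneg (hw i hi) _
    _ ≤ w i * (‖d i‖ * G) := by
        refine mul_le_mul_of_nonneg_left ((norm_smul_le _ _).trans ?_) (hw i hi)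
        gcongr
        exact hg i hi
    _ = G * (w i * ‖d i‖) := by ring

lemma norm_sub_sum_smul_le {x : E} {f : ι → E} {D : ℝ} (hw : ∀ i ∈ s, 0 ≤ w i)
    (hw_sum : ∑ i ∈ s, w i = 1) (hf : ∀ i ∈ s, ‖x - f i‖ ≤ D) :
    ‖x - ∑ i ∈ s, w i • f i‖ ≤ D := by
  rw [← mem_closedBall_iff_norm']
  exact (convex_closedBall x D).sum_mem hw hw_sum fun i hi => mem_closedBall_iff_norm'.2 (hf i hi)

end Normed

theorem stmt_12 {Y : Type*} [Fintype Y] [Nonempty Y]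
    (p : Y → ℝ) (hp : ∀ y, 0 ≤ p y) (hps : ∑ y, p y = 1)
    (r : Y → ℝ) (r_max : ℝ) (hr_max : 0 ≤ r_max) (hr : ∀ y, |r y| ≤ r_max)
    {E : Type*} [NormedAddCommGroup E] [NormedSpace ℝ E]
    (g : Y → E) (G : ℝ) (hG : 0 ≤ G) (hg : ∀ y, ‖g y‖ ≤ G)
    (c : ℝ) (hc : 0 < c) :
    ‖∑ y, p y • (((r y - ∑ z, p z * r z)) • g y)‖ ≤
      G * c + 2 * r_max * G * ((∑ y, p y * (r y - ∑ z, p z * r z) ^ 2) / c ^ 2) := by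
  have deviation_le (y : Y) : |r y - ∑ z, p z * r z| ≤ 2 * r_max :=
    norm_sub_sum_smul_le (x := r y) (f := r) (fun z _ => hp z) hps fun z _ =>
      (norm_sub_le_of_le (hr y) (hr z)).trans_eq (two_mul r_max).symm
  set mean := ∑ z, p z * r z
  calc ‖∑ y, p y • (r y - mean) • g y‖
      ≤ G * ∑ y, p y * |r y - mean| :=
        norm_sum_smul_smul_le (fun y _ => hp y) fun y _ => hg y
    _ ≤ G * ((∑ y, p y) * c + 2 * r_max * ((∑ y, p y * (r y - mean) ^ 2) / c ^ 2)) := by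
        gcongr
        exact sum_mul_abs_le_add_mul_sum_mul_sq_div_sq (fun y _ => hp y)
          (fun y _ => deviation_le y) hc
    _ = G * c + 2 * r_max * G * ((∑ y, p y * (r y - mean) ^ 2) / c ^ 2) := by
        rw [hps]
        ring
end

section
/- Let Y be a finite nonempty type, q : Y → ℝ a probability mass function with q y > 0 for all y, π : Y → ℝ with π y > 0 for all y, r : Y → ℝ, and β₁ > 0, β₂ > 0 real numbers. Let r̄ = ∑_y q y · r y. Then (β₁²/(4β₂)) · ∑_y q y · (r y − r̄ − (2β₂/β₁) · log (π y / q y))² + ∑_y q y · (β₁ · (r y − r̄) · log (π y) − β₂ · (log (π y / q y))²) = (β₁²/(4β₂)) · ∑_y q y · (r y − r̄)² + β₁ · ∑_y q y · (r y − r̄) · log (q y). -/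
/-!
Let `a` be the centered reward. Completing the square in `x = log (π / q)` turns
`β₁ * a * x - β₂ * x ^ 2` into `β₁ ^ 2 / (4 * β₂) * (a ^ 2 - (a - 2 * β₂ / β₁ * x) ^ 2)`. Since
`log π = x + log q`, using `log π` in place of `x` in the linear term adds only
`β₁ * a * log q`, which does not involve `π`.
-/

section CompleteSquare

variable {K : Type*} [Field K] [NeZero (2 : K)] {b c : K}

theorem scaled_sq_add_linear_sub_quadratic (hb : b ≠ 0) (hc : c ≠ 0) (a x : K) :
    b ^ 2 / (4 * c) * (a - 2 * c / b * x) ^ 2 + (b * a * x - c * x ^ 2) =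
      b ^ 2 / (4 * c) * a ^ 2 := by
  have four_ne : (4 : K) ≠ 0 := by
    rw [show (4 : K) = 2 * 2 by norm_num]
    exact mul_ne_zero two_ne_zero two_ne_zero
  field_simp
  ring

theorem sum_scaled_sq_add_linear_sub_quadratic {ι : Type*} (hb : b ≠ 0) (hc : c ≠ 0)
    (s : Finset ι) (w a x : ι → K) :
    b ^ 2 / (4 * c) * ∑ i ∈ s, w i * (a i - 2 * c / b * x i) ^ 2 +
        ∑ i ∈ s, w i * (b * a i * x i - c * x i ^ 2) =
      b ^ 2 / (4 * c) * ∑ i ∈ s, w i * a i ^ 2 := by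
  simp only [Finset.mul_sum, ← Finset.sum_add_distrib]
  refine Finset.sum_congr rfl fun i _ => ?_
  linear_combination w i * scaled_sq_add_linear_sub_quadratic hb hc (a i) (x i)

end CompleteSquare

theorem sum_mul_log_sub_sq_log_div {Y : Type*} {s : Finset Y} {p q : Y → ℝ}
    (hp : ∀ y ∈ s, 0 < p y) (hq : ∀ y ∈ s, 0 < q y) (w a : Y → ℝ) (b c : ℝ) :
    ∑ y ∈ s, w y * (b * a y * Real.log (p y) - c * Real.log (p y / q y) ^ 2) =
      ∑ y ∈ s, w y * (b * a y * Real.log (p y / q y) - c * Real.log (p y / q y) ^ 2) +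
        b * ∑ y ∈ s, w y * a y * Real.log (q y) := by
  rw [Finset.mul_sum, ← Finset.sum_add_distrib]
  refine Finset.sum_congr rfl fun y hy => ?_
  have log_ratio : Real.log (p y / q y) = Real.log (p y) - Real.log (q y) :=
    Real.log_div (hp y hy).ne' (hq y hy).ne'
  linear_combination -(w y * b * a y) * log_ratio

theorem stmt_16_general {Y : Type*} (s : Finset Y) (w a : Y → ℝ) {q π : Y → ℝ}
    (hq : ∀ y ∈ s, 0 < q y) (hπ : ∀ y ∈ s, 0 < π y) {β₁ β₂ : ℝ} (hβ₁ : β₁ ≠ 0) (hβ₂ : β₂ ≠ 0) :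
    (β₁ ^ 2 / (4 * β₂)) * ∑ y ∈ s, w y * (a y - (2 * β₂ / β₁) * Real.log (π y / q y)) ^ 2 +
      ∑ y ∈ s, w y * (β₁ * a y * Real.log (π y) - β₂ * (Real.log (π y / q y)) ^ 2) =
    (β₁ ^ 2 / (4 * β₂)) * ∑ y ∈ s, w y * a y ^ 2 +
      β₁ * ∑ y ∈ s, w y * a y * Real.log (q y) := by
  rw [sum_mul_log_sub_sq_log_div hπ hq, ← add_assoc,
    sum_scaled_sq_add_linear_sub_quadratic hβ₁ hβ₂]

theorem stmt_16 {Y : Type*} [Fintype Y] [Nonempty Y]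
    (q : Y → ℝ) (hq : ∀ y, 0 < q y) (hqs : ∑ y, q y = 1)
    (π : Y → ℝ) (hπ : ∀ y, 0 < π y)
    (r : Y → ℝ) (β₁ β₂ : ℝ) (hβ₁ : 0 < β₁) (hβ₂ : 0 < β₂) :
    (β₁ ^ 2 / (4 * β₂)) *
        ∑ y, q y * (r y - (∑ z, q z * r z) -
          (2 * β₂ / β₁) * Real.log (π y / q y)) ^ 2 +
      ∑ y, q y * (β₁ * (r y - ∑ z, q z * r z) * Real.log (π y) -
        β₂ * (Real.log (π y / q y)) ^ 2) =
    (β₁ ^ 2 / (4 * β₂)) * ∑ y, q y * (r y - ∑ z, q z * r z) ^ 2 +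
      β₁ * ∑ y, q y * (r y - ∑ z, q z * r z) * Real.log (q y) :=
  stmt_16_general Finset.univ q (fun y => r y - ∑ z, q z * r z)
    (fun y _ => hq y) (fun y _ => hπ y) hβ₁.ne' hβ₂.ne'
end
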